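/- Write m = t(d+1) + α with t ≥ 1 and 0 ≤ α ≤ d, and let σ ⊆ B be a simplex satisfying property P_t (with associated subscripts i_r = 1 + (r−1)(d+1), j_r = j_1 + (r−1)(d+1), and largest subscript k = m + j_1 − (d+1)). Then σ is a critical cell if and only if either j_t = k, or σ = {b_1, b_{j_1}, b_{i_2}, b_{j_2}, …, b_{i_t}, b_{j_t}, b_{i_{t+1}}} with k = i_{t+1} = 1 + t(d+1). -/

import Mathlib

open Finset

/-- The graph `G_m^d` on vertex set `Fin m ⊕ Fin m` (0-based indexing):
`Sum.inl i` is the vertex `a_{i+1}` and `Sum.inr j` is the vertex `b_{j+1}` of the paper;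
`a_i` is adjacent to `b_j` iff `(j - i) mod m ∈ {0, …, d-1}`. -/
def Gmd (m d : ℕ) : SimpleGraph (Fin m ⊕ Fin m) :=
  SimpleGraph.fromRel (fun u v =>
    ∃ i j : Fin m, u = Sum.inl i ∧ v = Sum.inr j ∧ (j.val + m - i.val) % m < d)

/-- A finite set of vertices is independent iff no two of its elements are adjacent. -/
def IsInd (m d : ℕ) (σ : Finset (Fin m ⊕ Fin m)) : Prop :=
  ∀ u ∈ σ, ∀ v ∈ σ, ¬ (Gmd m d).Adj u v

/-- The face poset `P` of the independence complex `Ind (G_m^d)` (ordered by `⊆`),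
including the empty simplex. -/
def faceP (m d : ℕ) : Set (Finset (Fin m ⊕ Fin m)) := {σ | IsInd m d σ}

/-- One step of the matching construction: `S_x(T) = {σ ∈ T | x ∉ σ, σ ∪ {x} ∈ T}`. -/
def stepS {α : Type*} [DecidableEq α] (x : α) (T : Set (Finset α)) : Set (Finset α) :=
  {σ | σ ∈ T ∧ x ∉ σ ∧ insert x σ ∈ T}

/-- The survivors of one step: `T \ (S_x(T) ∪ μ_x(S_x(T)))`. -/
def stepSurv {α : Type*} [DecidableEq α] (x : α) (T : Set (Finset α)) : Set (Finset α) :=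
  T \ (stepS x T ∪ (insert x) '' (stepS x T))

/-- Iterating the matching construction along a list of vertices. -/
def phase {α : Type*} [DecidableEq α] (T : Set (Finset α)) (l : List α) : Set (Finset α) :=
  l.foldl (fun T x => stepSurv x T) T

/-- The list `a_1, …, a_m`. -/
def listA (m : ℕ) : List (Fin m ⊕ Fin m) := (List.finRange m).map Sum.inl
/-- The list `b_1, …, b_m`. -/
def listB (m : ℕ) : List (Fin m ⊕ Fin m) := (List.finRange m).map Sum.inr

/-- `S_{a_{i+1}}` (0-based `i`): the set matched with `a_{i+1}` at stage `i+1` of phase one. -/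
def Sa (m d : ℕ) (i : Fin m) : Set (Finset (Fin m ⊕ Fin m)) :=
  stepS (Sum.inl i) (phase (faceP m d) ((listA m).take i.val))

/-- `M = P \ (S_1 ∪ μ_1(S_1))`, the simplices surviving phase one. -/
def setM (m d : ℕ) : Set (Finset (Fin m ⊕ Fin m)) := phase (faceP m d) (listA m)

/-- `S_{b_{i+1}}` (0-based `i`): the set matched with `b_{i+1}` at stage `i+1` of phase two. -/
def Sb (m d : ℕ) (i : Fin m) : Set (Finset (Fin m ⊕ Fin m)) :=
  stepS (Sum.inr i) (phase (setM m d) ((listB m).take i.val))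

/-- `𝒮_{a_{i+1}} = S_{a_{i+1}} ∪ μ_{a_{i+1}}(S_{a_{i+1}})`. -/
def scriptSa (m d : ℕ) (i : Fin m) : Set (Finset (Fin m ⊕ Fin m)) :=
  Sa m d i ∪ (insert (Sum.inl i)) '' (Sa m d i)

/-- `𝒮_{b_{i+1}} = S_{b_{i+1}} ∪ μ_{b_{i+1}}(S_{b_{i+1}})`. -/
def scriptSb (m d : ℕ) (i : Fin m) : Set (Finset (Fin m ⊕ Fin m)) :=
  Sb m d i ∪ (insert (Sum.inr i)) '' (Sb m d i)

/-- The critical cells `C = P \ (S ∪ μ(S))`. -/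
def setC (m d : ℕ) : Set (Finset (Fin m ⊕ Fin m)) :=
  faceP m d \ ((⋃ i : Fin m, scriptSa m d i) ∪ (⋃ i : Fin m, scriptSb m d i))

/-- The matching relation: `MatchRel σ τ` iff `τ = μ(σ)` for `σ ∈ S = S_1 ∪ S_2`. -/
def MatchRel (m d : ℕ) (σ τ : Finset (Fin m ⊕ Fin m)) : Prop :=
  (∃ i : Fin m, σ ∈ Sa m d i ∧ τ = insert (Sum.inl i) σ) ∨
  (∃ i : Fin m, σ ∈ Sb m d i ∧ τ = insert (Sum.inr i) σ)

/-- `B_{s+1} = {b_{s+1}, b_{s+2}, …, b_{s+m-d}}` (0-based `s`, subscripts mod `m`). -/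
def Bset (m d : ℕ) (s : Fin m) : Finset (Fin m ⊕ Fin m) :=
  (Finset.univ.filter (fun j : Fin m => (j.val + m - s.val) % m < m - d)).image Sum.inr

/-- `b_{n+1} ∈ σ` (0-based subscript `n`). -/
def hasB (m : ℕ) (σ : Finset (Fin m ⊕ Fin m)) (n : ℕ) : Prop :=
  ∃ j : Fin m, j.val = n ∧ Sum.inr j ∈ σ

/-- `σ ⊆ B`. -/
def onlyB (m : ℕ) (σ : Finset (Fin m ⊕ Fin m)) : Prop :=
  ∀ v ∈ σ, ∃ j : Fin m, v = Sum.inr j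

/-- Property `P_l` of the paper, with parameter `j1` (0-based: the paper's `j_1 - 1`, so
`1 ≤ j1 ≤ d`).  With 0-based subscripts `i_r = (r-1)(d+1)`, `j_r = j1 + (r-1)(d+1)` and
`k = m + j1 - (d+1)`:  σ ∈ M, σ ⊆ B, the `2l` smallest subscripts of σ are exactly
`0 = i_1, j_1, i_2, j_2, …, i_l, j_l`, the largest subscript is `k`, and
`σ \ {b_{i_r}} ∉ M`, `σ \ {b_{j_r}} ∉ M` for all `1 ≤ r ≤ l`. -/
def propP (m d l j1 : ℕ) (σ : Finset (Fin m ⊕ Fin m)) : Prop :=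
  σ ∈ setM m d ∧ onlyB m σ ∧ 1 ≤ j1 ∧ j1 ≤ d ∧
  (∀ r, 1 ≤ r → r ≤ l → hasB m σ ((r-1)*(d+1)) ∧ hasB m σ (j1 + (r-1)*(d+1))) ∧
  (∀ j : Fin m, Sum.inr j ∈ σ → j.val ≤ j1 + (l-1)*(d+1) →
      ∃ r, 1 ≤ r ∧ r ≤ l ∧ (j.val = (r-1)*(d+1) ∨ j.val = j1 + (r-1)*(d+1))) ∧
  hasB m σ (m + j1 - (d+1)) ∧
  (∀ j : Fin m, Sum.inr j ∈ σ → j.val ≤ m + j1 - (d+1)) ∧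
  (∀ r, 1 ≤ r → r ≤ l → ∀ j : Fin m,
      (j.val = (r-1)*(d+1) ∨ j.val = j1 + (r-1)*(d+1)) → σ.erase (Sum.inr j) ∉ setM m d)

/-!
A simplex survives the step at a vertex `x` unless both `insert x σ` and `σ.erase x` survive all
earlier steps. Phase one therefore leaves exactly the simplices that dominate `A`; for subsets of
`B` this means that the subscripts meet every cyclic window of length `d`, and phase two becomes
the same matching on an upward closed family of sets of natural numbers.

Subscripts are 0-based and `p` stands for `j_1`. Suppose that `s` starts with
`i_1, j_1, i_2, j_2, …` and that none of these elements can be removed. If `y ∉ s` lies in between,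
then `insert y s` has a redundant element `z < y`, and exchanging `z` for `y` leaves a set of the
same kind below `z`. By strong induction that set survives until step `z`, so `insert y s` has been
matched at `z` or before, and `s` survives the step at `y`.
Beyond `k`, adding any `y` makes `0` redundant, so nothing happens there either.

The only delicate step is `x = t (d + 1)`. If `x < k`, then `insert x s` and `s.erase x` are both
of the above kind, hence `s` is matched at `x`. If `x = k`, then `s.erase k` is either not a
transversal or already matched with `insert y (s.erase k)` for `y = p + k - m`, so `s` survives.
-/

section ElementMatching

variable {α β : Type*} [DecidableEq α] [DecidableEq β]

lemma mem_stepSurv_iff {x : α} {T : Set (Finset α)} {s : Finset α} :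
    s ∈ stepSurv x T ↔ s ∈ T ∧ ¬ (insert x s ∈ T ∧ s.erase x ∈ T) := by
  refine and_congr_right fun hs => not_congr ⟨?_, fun ⟨hins, hera⟩ => ?_⟩
  · rintro (⟨_, hx, hins⟩ | ⟨r, ⟨hr, hx, hins⟩, rfl⟩)
    · exact ⟨hins, by rwa [erase_eq_of_notMem hx]⟩
    · exact ⟨by simpa only [insert_idem] using hins, by rwa [erase_insert hx]⟩
  · by_cases hx : x ∈ s
    · exact .inr ⟨s.erase x, ⟨hera, notMem_erase x s, by rwa [insert_erase hx]⟩, insert_erase hx⟩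
    · exact .inl ⟨hs, hx, hins⟩

lemma phase_concat (T : Set (Finset α)) (l : List α) (x : α) :
    phase T (l ++ [x]) = stepSurv x (phase T l) :=
  List.foldl_append

lemma phase_subset (T : Set (Finset α)) (l : List α) : phase T l ⊆ T := by
  induction l using List.reverseRecOn with
  | nil => exact subset_rfl
  | append_singleton l x ih =>
    rw [phase_concat]
    exact Set.sdiff_subset.trans ih

lemma phase_map_finRange_eq_diff {m : ℕ} (f : Fin m → α) (T : Set (Finset α)) :
    phase T ((List.finRange m).map f) = T \ ⋃ i : Fin m,
      (stepS (f i) (phase T (((List.finRange m).map f).take i)) ∪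
        insert (f i) '' stepS (f i) (phase T (((List.finRange m).map f).take i))) := by
  set l := (List.finRange m).map f with hl
  have hlen : l.length = m := by simp [hl]
  have mem_phase_take (s : Finset α) (n : ℕ) (hn : n ≤ m) :
      s ∈ phase T (l.take n) ↔ s ∈ T ∧ ∀ i : Fin m, i < n →
        s ∉ stepS (f i) (phase T (l.take i)) ∪
          insert (f i) '' stepS (f i) (phase T (l.take i)) := by
    induction n with
    | zero => simp [phase]
    | succ n ih =>
      have hget : l[n] = f ⟨n, hn⟩ := by simp [hl]
      rw [List.take_succ_eq_append_getElem (by lia), phase_concat, hget, stepSurv, Set.mem_sdiff,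
        ih (by lia), and_assoc]
      refine and_congr_right fun _ => ⟨fun ⟨hlt, heq⟩ i hi => ?_, fun h => ⟨?_, ?_⟩⟩
      · obtain hi | hi := Nat.lt_succ_iff_lt_or_eq.1 hi
        · exact hlt i hi
        · obtain rfl : i = ⟨n, hn⟩ := Fin.ext hi
          exact heq
      · exact fun i hi => h i (by lia)
      · exact h ⟨n, hn⟩ n.lt_succ_self
  ext s
  have h := mem_phase_take s m le_rfl
  rw [List.take_of_length_le hlen.le] at h
  simp only [h, Fin.is_lt, forall_const, Set.mem_sdiff, Set.mem_iUnion, not_exists]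

lemma preimage_map_phase (f : α ↪ β) (T : Set (Finset β)) (l : List α) :
    Finset.map f ⁻¹' phase T (l.map f) = phase (Finset.map f ⁻¹' T) l := by
  induction l generalizing T with
  | nil => rfl
  | cons x l ih =>
    have preimage_stepSurv :
        Finset.map f ⁻¹' stepSurv (f x) T = stepSurv x (Finset.map f ⁻¹' T) := by
      ext s
      simp [mem_stepSurv_iff]
    change Finset.map f ⁻¹' phase (stepSurv (f x) T) (l.map f) = _
    rw [ih, preimage_stepSurv]
    rfl

lemma phase_isIndepSet (G : SimpleGraph α) {l : List α} (hl : G.IsIndepSet {x | x ∈ l}) :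
    phase {s : Finset α | G.IsIndepSet s} l =
      {s : Finset α | G.IsIndepSet (s : Set α) ∧ ∀ x ∈ l, ∃ v ∈ s, G.Adj x v} := by
  induction l using List.reverseRecOn with
  | nil => simp [phase]
  | append_singleton l x ih =>
    rw [phase_concat, ih (hl.mono fun y hy => List.mem_append_left [x] hy)]
    ext s
    rw [mem_stepSurv_iff]
    simp only [Set.mem_ofPred_eq, List.forall_mem_append, List.forall_mem_singleton]
    rw [← and_assoc (a := G.IsIndepSet (s : Set α))]
    refine and_congr_right fun ⟨hs, hdom⟩ => ?_
    have not_adj_of_mem : ∀ y ∈ l, ¬ G.Adj y x := fun y hy hyx =>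
      hl (List.mem_append_left [x] hy) (List.mem_append_right l (List.mem_singleton_self x))
        hyx.ne hyx
    have dom_erase : ∀ y ∈ l, ∃ v ∈ s.erase x, G.Adj y v := fun y hy => by
      obtain ⟨v, hv, hyv⟩ := hdom y hy
      exact ⟨v, mem_erase.2 ⟨fun h => not_adj_of_mem y hy (h ▸ hyv), hv⟩, hyv⟩
    constructor
    · intro h
      by_contra! hx
      refine h ⟨⟨?_, ?_⟩, ⟨hs.mono (erase_subset x s), dom_erase⟩⟩
      · rw [coe_insert]
        exact hs.insert fun v hv _ => ⟨hx v hv, fun hvx => hx v hv hvx.symm⟩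
      · exact fun y hy => (hdom y hy).imp fun v => And.imp_left mem_insert_of_mem
    · rintro ⟨v, hv, hxv⟩ ⟨⟨hins, _⟩, _⟩
      exact hins (mem_insert_self x s) (mem_insert_of_mem hv) hxv.ne hxv

end ElementMatching

lemma setC_eq_phase (m d : ℕ) : setC m d = phase (setM m d) (listB m) := by
  have hM : setM m d = faceP m d \ ⋃ i, scriptSa m d i := phase_map_finRange_eq_diff ..
  have hC : phase (setM m d) (listB m) = setM m d \ ⋃ i, scriptSb m d i :=
    phase_map_finRange_eq_diff ..
  rw [hC, hM, Set.sdiff_sdiff, setC]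

lemma faceP_eq (m d : ℕ) : faceP m d = {σ : Finset (Fin m ⊕ Fin m) | (Gmd m d).IsIndepSet σ} := by
  ext s
  exact ⟨fun h u hu v hv _ => h u hu v hv, fun h u hu v hv huv => h hu hv huv.ne huv⟩

lemma not_adj_inl_inl {m d : ℕ} (i j : Fin m) : ¬ (Gmd m d).Adj (.inl i) (.inl j) := by
  simp [Gmd]

lemma not_adj_inr_inr {m d : ℕ} (i j : Fin m) : ¬ (Gmd m d).Adj (.inr i) (.inr j) := by
  simp [Gmd]

lemma adj_inl_inr_iff {m d : ℕ} (hdm : d ≤ m) (i j : Fin m) :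
    (Gmd m d).Adj (.inl i) (.inr j) ↔ (i : ℕ) ≤ j ∧ (j : ℕ) < i + d ∨ (j : ℕ) + m < i + d := by
  have hadj : (Gmd m d).Adj (.inl i) (.inr j) ↔ (j.val + m - i.val) % m < d := by simp [Gmd]
  rw [hadj]
  obtain hij | hij := le_or_gt (i : ℕ) j
  · rw [show j.val + m - i.val = (j.val - i.val) + m by lia, Nat.add_mod_right,
      Nat.mod_eq_of_lt (by lia)]
    lia
  · rw [Nat.mod_eq_of_lt (by lia)]
    lia

/-- The sets of (0-based) subscripts meeting each of the `m` cyclic windows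
`{i, i + 1, …, i + d - 1}` modulo `m`. These windows are the neighbourhoods of the `a_i`, so that
the members of `setM m d` correspond to the transversals contained in `{0, …, m - 1}`. -/
def transversals (m d : ℕ) : Set (Finset ℕ) :=
  {s | ∀ i < m, ∃ n ∈ s, i ≤ n ∧ n < i + d ∨ n + m < i + d}

/-- The (0-based) subscripts `n` with `b_n ∈ σ`. -/
def subscripts {m : ℕ} (σ : Finset (Fin m ⊕ Fin m)) : Finset ℕ :=
  σ.toRight.map Fin.valEmbedding

lemma mem_subscripts {m : ℕ} {σ : Finset (Fin m ⊕ Fin m)} {n : ℕ} :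
    n ∈ subscripts σ ↔ hasB m σ n := by
  simp [subscripts, hasB, and_comm]

lemma coe_mem_subscripts {m : ℕ} {σ : Finset (Fin m ⊕ Fin m)} {j : Fin m} :
    (j : ℕ) ∈ subscripts σ ↔ Sum.inr j ∈ σ := by
  simp [subscripts, Fin.val_inj]

lemma subscripts_erase {m : ℕ} (σ : Finset (Fin m ⊕ Fin m)) (j : Fin m) :
    subscripts (σ.erase (.inr j)) = (subscripts σ).erase j := by
  have : (σ.erase (.inr j)).toRight = σ.toRight.erase j := by ext; simp
  rw [subscripts, this]
  exact map_erase Fin.valEmbedding _ _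

lemma map_inr_toRight {m : ℕ} {σ : Finset (Fin m ⊕ Fin m)} (hσ : onlyB m σ) :
    σ.toRight.map .inr = σ := by
  ext (i | j)
  · simpa using fun hi => by simpa using hσ _ hi
  · simp

lemma setM_eq (m d : ℕ) :
    setM m d = {σ : Finset (Fin m ⊕ Fin m) | (Gmd m d).IsIndepSet σ ∧
      ∀ i, ∃ v ∈ σ, (Gmd m d).Adj (.inl i) v} := by
  have hA : (Gmd m d).IsIndepSet {v | v ∈ listA m} := by
    rintro u hu v hv -
    simp only [listA, List.mem_map, List.mem_finRange, true_and, Set.mem_ofPred_eq] at hu hv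
    obtain ⟨⟨i, rfl⟩, ⟨j, rfl⟩⟩ := And.intro hu hv
    exact not_adj_inl_inl i j
  rw [setM, faceP_eq, phase_isIndepSet _ hA]
  simp [listA]

lemma map_inr_mem_setM_iff {m d : ℕ} (hdm : d ≤ m) (s : Finset (Fin m)) :
    s.map .inr ∈ setM m d ↔ s.map Fin.valEmbedding ∈ transversals m d := by
  have hs : (Gmd m d).IsIndepSet (s.map .inr : Finset (Fin m ⊕ Fin m)) := by
    rintro u hu v hv -
    simp only [mem_coe, mem_map, Function.Embedding.inr_apply] at hu hv
    obtain ⟨⟨i, -, rfl⟩, ⟨j, -, rfl⟩⟩ := And.intro hu hv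
    exact not_adj_inr_inr i j
  rw [setM_eq, Set.mem_ofPred_eq, and_iff_right hs]
  simp only [transversals, Set.mem_ofPred_eq, mem_map, exists_exists_and_eq_and,
    Function.Embedding.inr_apply, Fin.valEmbedding_apply, adj_inl_inr_iff hdm, Fin.forall_iff]

lemma mem_setM_iff {m d : ℕ} (hdm : d ≤ m) {σ : Finset (Fin m ⊕ Fin m)} (hσ : onlyB m σ) :
    σ ∈ setM m d ↔ subscripts σ ∈ transversals m d := by
  rw [subscripts, ← map_inr_mem_setM_iff hdm, map_inr_toRight hσ]

lemma mem_setC_iff {m d : ℕ} (hdm : d ≤ m) {σ : Finset (Fin m ⊕ Fin m)} (hσ : onlyB m σ) :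
    σ ∈ setC m d ↔ subscripts σ ∈ phase (transversals m d) (List.range m) := by
  have hT : Finset.map .inr ⁻¹' setM m d = Finset.map Fin.valEmbedding ⁻¹' transversals m d :=
    Set.ext (map_inr_mem_setM_iff hdm)
  have hB : Finset.map .inr ⁻¹' phase (setM m d) (listB m) =
      Finset.map Fin.valEmbedding ⁻¹'
        phase (transversals m d) ((List.finRange m).map Fin.valEmbedding) := by
    rw [preimage_map_phase, ← hT]
    exact preimage_map_phase .inr _ _
  have hrange : (List.finRange m).map Fin.valEmbedding = List.range m :=
    List.map_coe_finRange_eq_range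
  rw [setC_eq_phase, ← hrange, subscripts, ← Set.mem_preimage, ← hB, Set.mem_preimage,
    map_inr_toRight hσ]

section PhaseRange

variable {T : Set (Finset ℕ)} {s : Finset ℕ} {n : ℕ}

lemma mem_phase_range_iff :
    s ∈ phase T (List.range n) ↔ s ∈ T ∧ ∀ y < n,
      ¬ (insert y s ∈ phase T (List.range y) ∧ s.erase y ∈ phase T (List.range y)) := by
  induction n with
  | zero => simp [phase]
  | succ n ih =>
    rw [List.range_succ, phase_concat, mem_stepSurv_iff, ih, and_assoc,
      Nat.forall_lt_succ_right]

lemma notMem_phase_range_of_erase_mem {z : ℕ} (hz : z ∈ s) (hzn : z < n)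
    (h : s.erase z ∈ phase T (List.range z)) : s ∉ phase T (List.range n) := by
  intro hs
  have hs' := mem_phase_range_iff.1 hs
  refine hs'.2 z hzn ⟨?_, h⟩
  rw [insert_eq_of_mem hz]
  exact mem_phase_range_iff.2 ⟨hs'.1, fun y hy => hs'.2 y (hy.trans hzn)⟩

lemma notMem_phase_range_of_insert_mem {z : ℕ} (hz : z ∉ s) (hzn : z < n)
    (h : insert z s ∈ phase T (List.range z)) : s ∉ phase T (List.range n) := by
  intro hs
  have hs' := mem_phase_range_iff.1 hs
  refine hs'.2 z hzn ⟨h, ?_⟩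
  rw [erase_eq_of_notMem hz]
  exact mem_phase_range_iff.2 ⟨hs'.1, fun y hy => hs'.2 y (hy.trans hzn)⟩

lemma notMem_phase_range_of_erase_zero_mem (h0 : 0 ∈ s) (hn : 0 < n) (h : s.erase 0 ∈ T) :
    s ∉ phase T (List.range n) :=
  notMem_phase_range_of_erase_mem h0 hn h

lemma mem_phase_range_of_erase_zero_notMem (hs : s ∈ T) (h0 : 0 ∈ s) (h : s.erase 0 ∉ T)
    (hins : ∀ y, 0 < y → y < n → (insert y s).erase 0 ∈ T) : s ∈ phase T (List.range n) := by
  refine mem_phase_range_iff.2 ⟨hs, fun y hyn ⟨hy, hy'⟩ => ?_⟩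
  obtain rfl | hy0 := y.eq_zero_or_pos
  · exact h hy'
  · exact notMem_phase_range_of_erase_zero_mem (mem_insert_of_mem h0) hy0 (hins y hy0 hyn) hy

end PhaseRange

section Transversals

variable {m d : ℕ} {s : Finset ℕ}

lemma isUpperSet_transversals (m d : ℕ) : IsUpperSet (transversals m d) :=
  fun _ _ hst hs i hi => (hs i hi).imp fun _ => And.imp_left (hst ·)

/-- `z` lies strictly between two elements of `s` at cyclic distance at most `d` modulo `m`.
The wrap-around is only encoded for `z = 0`, the only case where it is needed. -/
def IsFlanked (m d : ℕ) (s : Finset ℕ) (z : ℕ) : Prop :=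
  ∃ p ∈ s, ∃ q ∈ s, (p < z ∧ z < q ∧ q ≤ p + d) ∨ (z = 0 ∧ 0 < q ∧ p < m ∧ q + m ≤ p + d)

lemma IsFlanked.erase_mem_transversals {z : ℕ} (hz : IsFlanked m d s z)
    (hs : s ∈ transversals m d) : s.erase z ∈ transversals m d := by
  obtain ⟨p, hp, q, hq, hpq⟩ := hz
  intro i hi
  obtain ⟨n, hn, hni⟩ := hs i hi
  obtain rfl | hnz := eq_or_ne n z
  · by_cases hpi : p ≠ n ∧ (i ≤ p ∧ p < i + d ∨ p + m < i + d)
    · exact ⟨p, mem_erase.2 ⟨hpi.1, hp⟩, hpi.2⟩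
    · exact ⟨q, mem_erase.2 ⟨by lia, hq⟩, by lia⟩
  · exact ⟨n, mem_erase.2 ⟨hnz, hn⟩, hni⟩

lemma erase_mem_transversals_of_insert {w y z k : ℕ} (hs : s ∈ transversals m d)
    (hwz : w < z) (hzy : z < y) (hyk : y < k) (hkm : k < m) (hz : z ∈ s) (hk : k ∈ s)
    (h : (insert y s).erase w ∈ transversals m d) : s.erase w ∈ transversals m d := by
  intro i hi
  obtain ⟨n, hn, hni⟩ := h i hi
  rw [mem_erase, mem_insert] at hn
  obtain ⟨hnw, rfl | hns⟩ := hn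
  · obtain ⟨n', hn', hni'⟩ := hs i hi
    obtain rfl | hnw' := eq_or_ne n' w
    · by_cases hzi : i ≤ z ∧ z < i + d ∨ z + m < i + d
      · exact ⟨z, mem_erase.2 ⟨hwz.ne', hz⟩, hzi⟩
      · exact ⟨k, mem_erase.2 ⟨by lia, hk⟩, by lia⟩
    · exact ⟨n', mem_erase.2 ⟨hnw', hn'⟩, hni'⟩
  · exact ⟨n, mem_erase.2 ⟨hnw, hns⟩, hni⟩

lemma mem_phase_range_of_mem_phase_range_succ {p k : ℕ}
    (hs : s ∈ phase (transversals m d) (List.range (k + 1)))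
    (h0 : 0 ∈ s) (hp : p ∈ s) (hp0 : 0 < p) (hk : k + (d + 1) = m + p) :
    s ∈ phase (transversals m d) (List.range m) := by
  obtain ⟨hsT, hs⟩ := mem_phase_range_iff.1 hs
  refine mem_phase_range_iff.2 ⟨hsT, fun y hym => ?_⟩
  obtain hyk | hky := Nat.lt_or_ge y (k + 1)
  · exact hs y hyk
  have hflank : IsFlanked m d (insert y s) 0 :=
    ⟨y, mem_insert_self y s, p, mem_insert_of_mem hp, .inr (by lia)⟩
  refine fun ⟨hins, _⟩ => notMem_phase_range_of_erase_zero_mem (mem_insert_of_mem h0) (by lia)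
    (hflank.erase_mem_transversals ?_) hins
  exact isUpperSet_transversals m d (subset_insert y s) hsT

end Transversals

/-- The (0-based) subscripts `i_r` and `j_r` of the property `P_l`, for all `r`, where `p` is the
(0-based) subscript `j_1`. -/
def periodicSubscripts (d p : ℕ) : Set ℕ :=
  {n | ∃ r, n = r * (d + 1) ∨ n = p + r * (d + 1)}

lemma eq_or_eq_of_mem_periodicSubscripts {d p n r : ℕ} (hn : n ∈ periodicSubscripts d p)
    (hp : p ≤ d) (hrn : r * (d + 1) ≤ n) (hnr : n < r * (d + 1) + (d + 1)) :
    n = r * (d + 1) ∨ n = p + r * (d + 1) := by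
  obtain ⟨r', hr'⟩ := hn
  have hle : r ≤ r' := Nat.lt_succ_iff.1 <| Nat.lt_of_mul_lt_mul_right (a := d + 1) <| by
    rw [Nat.succ_mul]; lia
  have hge : r' ≤ r := Nat.lt_succ_iff.1 <| Nat.lt_of_mul_lt_mul_right (a := d + 1) <| by
    rw [Nat.succ_mul]; lia
  rwa [le_antisymm hle hge]

/-- The part of property `P_l` that concerns the subscripts below `n`: up to there the transversal
`s` is the periodic sequence of the `i_r` and `j_r`, none of which can be removed. The element `k`
plays the role of the largest subscript. -/
structure IsRigidBelow (m d p k n : ℕ) (s : Finset ℕ) : Prop where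
  mem_transversals : s ∈ transversals m d
  last_mem : k ∈ s
  mem_iff : ∀ y < n, y ∈ s ↔ y ∈ periodicSubscripts d p
  erase_notMem : ∀ y < n, y ∈ s → s.erase y ∉ transversals m d

namespace IsRigidBelow

variable {m d p k n : ℕ} {s : Finset ℕ}

lemma mono {n' : ℕ} (h : IsRigidBelow m d p k n s) (hn : n' ≤ n) : IsRigidBelow m d p k n' s :=
  ⟨h.mem_transversals, h.last_mem, fun y hy => h.mem_iff y (hy.trans_le hn),
    fun y hy => h.erase_notMem y (hy.trans_le hn)⟩

lemma zero_mem (h : IsRigidBelow m d p k n s) (hn : 0 < n) : 0 ∈ s :=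
  (h.mem_iff 0 hn).2 ⟨0, .inl (Nat.zero_mul _).symm⟩

lemma exists_isFlanked_insert (h : IsRigidBelow m d p k n s) (hp0 : 0 < p) (hpd : p ≤ d)
    (hk : k + (d + 1) = m + p) {y : ℕ} (hyn : y < n) (hy : y ∉ s) :
    ∃ z ∈ s, z < y ∧ IsFlanked m d (insert y s) z := by
  have i_mem (r : ℕ) (hr : r * (d + 1) < n) : r * (d + 1) ∈ s := (h.mem_iff _ hr).2 ⟨r, .inl rfl⟩
  have j_mem (r : ℕ) (hr : p + r * (d + 1) < n) : p + r * (d + 1) ∈ s :=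
    (h.mem_iff _ hr).2 ⟨r, .inr rfl⟩
  have hy_mem : y ∈ insert y s := mem_insert_self y s
  obtain ⟨q, r, hq, rfl⟩ : ∃ q r, q ≤ d ∧ y = q + r * (d + 1) :=
    ⟨y % (d + 1), y / (d + 1), Nat.lt_succ_iff.1 (Nat.mod_lt y d.succ_pos),
      (Nat.mod_add_div' y (d + 1)).symm⟩
  have hq0 : q ≠ 0 := by
    rintro rfl
    exact hy (by simpa using i_mem r (by lia))
  have hqp : q ≠ p := by
    rintro rfl
    exact hy (j_mem r hyn)
  obtain hqp | hpq := hqp.lt_or_gt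
  · obtain _ | r := r
    · refine ⟨0, h.zero_mem (by lia), by lia, k, mem_insert_of_mem h.last_mem, _, hy_mem, ?_⟩
      exact .inr (by lia)
    · refine ⟨(r + 1) * (d + 1), i_mem _ (by lia), by lia, p + r * (d + 1),
        mem_insert_of_mem (j_mem r (by lia)), _, hy_mem, .inl (by lia)⟩
  · exact ⟨p + r * (d + 1), j_mem r (by lia), by lia, r * (d + 1),
      mem_insert_of_mem (i_mem r (by lia)), _, hy_mem, .inl (by lia)⟩

lemma erase_insert (h : IsRigidBelow m d p k n s) {y z : ℕ} (hkm : k < m) (hyn : y < n)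
    (hyk : y < k) (hz : z ∈ s) (hzy : z < y) (hflank : IsFlanked m d (insert y s) z) :
    IsRigidBelow m d p k z ((insert y s).erase z) where
  mem_transversals := hflank.erase_mem_transversals <|
    isUpperSet_transversals m d (subset_insert y s) h.mem_transversals
  last_mem := by simp [h.last_mem, (hzy.trans hyk).ne']
  mem_iff w hw := by simp [← h.mem_iff w (by lia), hw.ne, (hw.trans hzy).ne]
  erase_notMem w hw hws hbad := by
    have hws' : w ∈ s := by simpa [hw.ne, (hw.trans hzy).ne] using hws
    refine h.erase_notMem w (by lia) hws' ?_
    refine erase_mem_transversals_of_insert h.mem_transversals hw hzy hyk hkm hz h.last_mem ?_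
    exact isUpperSet_transversals m d (erase_subset_erase w (erase_subset z _)) hbad

theorem mem_phase_range (h : IsRigidBelow m d p k n s) (hp0 : 0 < p) (hpd : p ≤ d)
    (hk : k + (d + 1) = m + p) (hn : n ≤ k + 1) :
    s ∈ phase (transversals m d) (List.range n) := by
  induction n using Nat.strong_induction_on generalizing s with
  | _ n ih =>
    refine mem_phase_range_iff.2 ⟨h.mem_transversals, fun y hyn ⟨hins, hera⟩ => ?_⟩
    by_cases hy : y ∈ s
    · exact h.erase_notMem y hyn hy (phase_subset _ _ hera)
    have hyk : y < k := by
      have : y ≠ k := fun hyk => hy (hyk ▸ h.last_mem)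
      lia
    obtain ⟨z, hz, hzy, hflank⟩ := h.exists_isFlanked_insert hp0 hpd hk hyn hy
    refine notMem_phase_range_of_erase_mem (mem_insert_of_mem hz) hzy ?_ hins
    exact ih z (by lia) (h.erase_insert (by lia) hyn hyk hz hzy hflank) (by lia)

lemma le_of_mem_of_lt {u : ℕ} (h : IsRigidBelow m d p k ((u + 1) * (d + 1)) s) (hpd : p ≤ d)
    (hn : n ∈ s) (hnu : n < (u + 1) * (d + 1)) : n ≤ p + u * (d + 1) := by
  by_contra! hlt
  have := eq_or_eq_of_mem_periodicSubscripts ((h.mem_iff n hnu).1 hn) hpd (r := u)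
    (by lia) (by lia)
  lia

lemma eq_zero_of_mem_of_lt (h : IsRigidBelow m d p k n s) (hpd : p ≤ d) (hpn : p ≤ n) {y : ℕ}
    (hy : y ∈ s) (hyp : y < p) : y = 0 := by
  have := eq_or_eq_of_mem_periodicSubscripts (r := 0) ((h.mem_iff y (by lia)).1 hy) hpd
    (by lia) (by lia)
  lia

lemma add_lt_of_mem_window {u : ℕ} (h : IsRigidBelow m d p k ((u + 1) * (d + 1)) s)
    (hpd : p ≤ d) (hmax : ∀ n ∈ s, n ≤ k) (hku : k = (u + 1) * (d + 1)) (hn : n ∈ s.erase k)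
    (hwin : p + u * (d + 1) + 1 ≤ n ∧ n < p + u * (d + 1) + 1 + d ∨
      n + m < p + u * (d + 1) + 1 + d) : n + m < p + k := by
  have hns := mem_of_mem_erase hn
  have hle := h.le_of_mem_of_lt hpd hns
    (hku ▸ (hmax n hns).lt_of_ne (ne_of_mem_erase hn))
  lia

lemma insert_erase_last_mem_phase_range {u y : ℕ}
    (h : IsRigidBelow m d p k ((u + 1) * (d + 1)) s) (hpd : p ≤ d)
    (hk : k + (d + 1) = m + p) (hmax : ∀ n ∈ s, n ≤ k) (hku : k = (u + 1) * (d + 1))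
    (hera : s.erase k ∈ transversals m d) (hy0 : 0 < y) (hy : y + m = p + k) :
    insert y (s.erase k) ∈ phase (transversals m d) (List.range y) := by
  have hT : insert y (s.erase k) ∈ transversals m d :=
    isUpperSet_transversals m d (subset_insert y _) hera
  have h0 : 0 ∈ insert y (s.erase k) :=
    mem_insert_of_mem (mem_erase.2 ⟨by lia, h.zero_mem (by lia)⟩)
  refine mem_phase_range_of_erase_zero_notMem hT h0 (fun hbad => ?_) fun z hz hzy => ?_
  · obtain ⟨n, hn, hwin⟩ := hbad (p + u * (d + 1) + 1) (by lia)
    rw [mem_erase, mem_insert] at hn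
    obtain ⟨hn0, rfl | hns⟩ := hn
    · lia
    · have := h.add_lt_of_mem_window hpd hmax hku hns hwin
      exact hn0 (h.eq_zero_of_mem_of_lt hpd (by lia) (mem_of_mem_erase hns) (by lia))
  · have hlast : p + u * (d + 1) ∈ s.erase k :=
      mem_erase.2 ⟨by lia, (h.mem_iff _ (by lia)).2 ⟨u, .inr rfl⟩⟩
    have hflank : IsFlanked m d (insert z (insert y (s.erase k))) 0 :=
      ⟨p + u * (d + 1), mem_insert_of_mem (mem_insert_of_mem hlast),
        z, mem_insert_self z _, .inr (by lia)⟩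
    exact hflank.erase_mem_transversals (isUpperSet_transversals m d (subset_insert z _) hT)

lemma erase_last_notMem_phase_range {u : ℕ}
    (h : IsRigidBelow m d p k ((u + 1) * (d + 1)) s) (hpd : p ≤ d)
    (hk : k + (d + 1) = m + p) (hmax : ∀ n ∈ s, n ≤ k) (hku : k = (u + 1) * (d + 1)) :
    s.erase k ∉ phase (transversals m d) (List.range k) := by
  intro hera
  have heraT : s.erase k ∈ transversals m d := phase_subset _ _ hera
  have hmp : m < p + k := by
    obtain ⟨n, hn, hwin⟩ := heraT (p + u * (d + 1) + 1) (by lia)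
    have := h.add_lt_of_mem_window hpd hmax hku hn hwin
    lia
  obtain ⟨y, hy⟩ : ∃ y, y + m = p + k := ⟨p + k - m, by lia⟩
  have hys : y ∉ s.erase k := fun hys => by
    have := h.eq_zero_of_mem_of_lt hpd (by lia) (mem_of_mem_erase hys) (by lia)
    lia
  exact notMem_phase_range_of_insert_mem hys (by lia)
    (h.insert_erase_last_mem_phase_range hpd hk hmax hku heraT (by lia) hy) hera

lemma insert_of_lt_last {u : ℕ} (h : IsRigidBelow m d p k ((u + 1) * (d + 1)) s) (hpd : p ≤ d)
    (hkm : k < m) (huk : (u + 1) * (d + 1) < k) :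
    IsRigidBelow m d p k ((u + 1) * (d + 1)) (insert ((u + 1) * (d + 1)) s) where
  mem_transversals := isUpperSet_transversals m d (subset_insert _ s) h.mem_transversals
  last_mem := mem_insert_of_mem h.last_mem
  mem_iff w hw := by rw [mem_insert, ← h.mem_iff w hw, or_iff_right hw.ne]
  erase_notMem w hw hws hbad := by
    have hws' : w ∈ s := mem_of_mem_insert_of_ne hws hw.ne
    obtain hwp | rfl := (h.le_of_mem_of_lt hpd hws' hw).lt_or_eq
    · have hz : p + u * (d + 1) ∈ s := (h.mem_iff _ (by lia)).2 ⟨u, .inr rfl⟩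
      exact h.erase_notMem w hw hws' <|
        erase_mem_transversals_of_insert h.mem_transversals hwp (by lia) huk hkm hz h.last_mem hbad
    · obtain ⟨n, hn, hit⟩ := hbad (u * (d + 1) + 1) (by lia)
      rw [mem_erase, mem_insert] at hn
      obtain ⟨hnw, rfl | hns⟩ := hn
      · lia
      · have := eq_or_eq_of_mem_periodicSubscripts (r := u) ((h.mem_iff n (by lia)).1 hns) hpd
          (by lia) (by lia)
        lia

lemma erase_of_lt_last {u : ℕ} (h : IsRigidBelow m d p k ((u + 1) * (d + 1)) s) (hpd : p ≤ d)
    (hk : k + (d + 1) = m + p) (hm : m < (u + 2) * (d + 1)) (huk : (u + 1) * (d + 1) < k) :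
    IsRigidBelow m d p k ((u + 1) * (d + 1)) (s.erase ((u + 1) * (d + 1))) where
  mem_transversals := by
    have hz : p + u * (d + 1) ∈ s := (h.mem_iff _ (by lia)).2 ⟨u, .inr rfl⟩
    have hflank : IsFlanked m d s ((u + 1) * (d + 1)) := ⟨_, hz, k, h.last_mem, .inl (by lia)⟩
    exact hflank.erase_mem_transversals h.mem_transversals
  last_mem := mem_erase.2 ⟨huk.ne', h.last_mem⟩
  mem_iff w hw := by rw [mem_erase, ← h.mem_iff w hw, and_iff_right hw.ne]
  erase_notMem w hw hws hbad := h.erase_notMem w hw (mem_of_mem_erase hws) <|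
    isUpperSet_transversals m d (erase_subset_erase w (erase_subset _ s)) hbad

theorem mem_phase_range_iff_le {u : ℕ} (h : IsRigidBelow m d p k ((u + 1) * (d + 1)) s)
    (hp0 : 0 < p) (hpd : p ≤ d) (hk : k + (d + 1) = m + p) (hm : m < (u + 2) * (d + 1))
    (hmax : ∀ n ∈ s, n ≤ k) :
    s ∈ phase (transversals m d) (List.range m) ↔ k ≤ (u + 1) * (d + 1) := by
  refine ⟨fun hs => ?_, fun hku => ?_⟩
  · by_contra! huk
    have hins := (h.insert_of_lt_last hpd (by lia) huk).mem_phase_range hp0 hpd hk (by lia)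
    have hera := (h.erase_of_lt_last hpd hk hm huk).mem_phase_range hp0 hpd hk (by lia)
    exact (mem_phase_range_iff.1 hs).2 _ (by lia) ⟨hins, hera⟩
  · have hp : p ∈ s := (h.mem_iff p (by lia)).2 ⟨0, .inr (by lia)⟩
    refine mem_phase_range_of_mem_phase_range_succ ?_ (h.zero_mem (by lia)) hp hp0 hk
    obtain hku | hku := hku.lt_or_eq
    · exact (h.mono hku).mem_phase_range hp0 hpd hk le_rfl
    · rw [List.range_succ, phase_concat, mem_stepSurv_iff]
      exact ⟨(h.mono hku.le).mem_phase_range hp0 hpd hk k.le_succ,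
        fun ⟨_, hera⟩ => h.erase_last_notMem_phase_range hpd hk hmax hku hera⟩

lemma last_lt_iff {u : ℕ} (h : IsRigidBelow m d p k ((u + 1) * (d + 1)) s) (hpd : p ≤ d)
    (hk : k + (d + 1) = m + p) (hm : (u + 1) * (d + 1) ≤ m) :
    k < (u + 1) * (d + 1) ↔ p + u * (d + 1) = k := by
  refine ⟨fun hku => ?_, fun hku => by lia⟩
  have := h.le_of_mem_of_lt hpd h.last_mem hku
  lia

lemma mem_iff_of_last_eq {t : ℕ} (h : IsRigidBelow m d p k (t * (d + 1)) s) (hpd : p ≤ d)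
    (hmax : ∀ n ∈ s, n ≤ k) (hkt : k = t * (d + 1)) :
    n ∈ s ↔ (∃ r, r ≤ t ∧ n = r * (d + 1)) ∨ ∃ r, r < t ∧ n = p + r * (d + 1) := by
  constructor
  · intro hn
    obtain hnk | rfl := (hmax n hn).lt_or_eq
    · obtain ⟨r, hr⟩ := (h.mem_iff n (hkt ▸ hnk)).1 hn
      have hrt : r < t := Nat.lt_of_mul_lt_mul_right (a := d + 1) (by lia)
      exact hr.imp (⟨r, hrt.le, ·⟩) (⟨r, hrt, ·⟩)
    · exact .inl ⟨t, le_rfl, hkt⟩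
  · rintro (⟨r, hrt, rfl⟩ | ⟨r, hrt, rfl⟩)
    · obtain hrt | rfl := hrt.lt_or_eq
      · exact (h.mem_iff _ (by gcongr)).2 ⟨r, .inl rfl⟩
      · exact hkt ▸ h.last_mem
    · have := Nat.mul_le_mul_right (d + 1) (Nat.succ_le_of_lt hrt)
      rw [Nat.succ_mul] at this
      exact (h.mem_iff _ (by lia)).2 ⟨r, .inr rfl⟩

end IsRigidBelow

namespace propP

variable {m d l p : ℕ} {σ : Finset (Fin m ⊕ Fin m)}

lemma mem_subscripts_of_lt (h : propP m d l p σ) {r n : ℕ} (hr : r < l)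
    (hn : n = r * (d + 1) ∨ n = p + r * (d + 1)) : n ∈ subscripts σ := by
  obtain ⟨-, -, -, -, hmem, -⟩ := h
  obtain ⟨hi, hj⟩ := hmem (r + 1) (by lia) hr
  obtain rfl | rfl := hn
  exacts [mem_subscripts.2 hi, mem_subscripts.2 hj]

lemma erase_notMem_transversals (h : propP m d l p σ) (hdm : d ≤ m) {r n : ℕ} (hr : r < l)
    (hn : n = r * (d + 1) ∨ n = p + r * (d + 1)) : (subscripts σ).erase n ∉ transversals m d := by
  obtain ⟨j, rfl, -⟩ := mem_subscripts.1 (h.mem_subscripts_of_lt hr hn)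
  obtain ⟨-, hB, -, -, -, -, -, -, hera⟩ := h
  rw [← subscripts_erase, ← mem_setM_iff hdm fun v hv => hB v (mem_of_mem_erase hv)]
  exact hera (r + 1) (by lia) hr j hn

lemma isRigidBelow {u : ℕ} (h : propP m d (u + 1) p σ) (hdm : d ≤ m) :
    IsRigidBelow m d p (m + p - (d + 1)) ((u + 1) * (d + 1)) (subscripts σ) := by
  have ⟨hM, hB, hp0, _, _, hfirst, hlast, _⟩ := h
  have hT : subscripts σ ∈ transversals m d := (mem_setM_iff hdm hB).1 hM
  have le_of_lt_mul {n : ℕ} (hn : n ∈ subscripts σ) (hnu : n < (u + 1) * (d + 1)) :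
      n ≤ p + u * (d + 1) := by
    by_contra! hlt
    have hflank : IsFlanked m d (subscripts σ) (p + u * (d + 1)) :=
      ⟨u * (d + 1), h.mem_subscripts_of_lt u.lt_succ_self (.inl rfl), n, hn, .inl (by lia)⟩
    exact h.erase_notMem_transversals hdm u.lt_succ_self (.inr rfl)
      (hflank.erase_mem_transversals hT)
  have exists_eq {n : ℕ} (hn : n ∈ subscripts σ) (hnu : n < (u + 1) * (d + 1)) :
      ∃ r < u + 1, n = r * (d + 1) ∨ n = p + r * (d + 1) := by
    obtain ⟨j, rfl, hj⟩ := mem_subscripts.1 hn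
    obtain ⟨r, hr1, hru, hr⟩ := hfirst j hj (le_of_lt_mul hn hnu)
    exact ⟨r - 1, by lia, hr⟩
  refine ⟨hT, mem_subscripts.2 hlast, fun n hnu => ⟨fun hn => ?_, fun ⟨r, hr⟩ => ?_⟩,
    fun n hnu hn => ?_⟩
  · obtain ⟨r, -, hr⟩ := exists_eq hn hnu
    exact ⟨r, hr⟩
  · exact h.mem_subscripts_of_lt (Nat.lt_of_mul_lt_mul_right (a := d + 1) (by lia)) hr
  · obtain ⟨r, hru, hr⟩ := exists_eq hn hnu
    exact h.erase_notMem_transversals hdm hru hr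

lemma le_of_mem_subscripts (h : propP m d l p σ) :
    ∀ n ∈ subscripts σ, n ≤ m + p - (d + 1) := by
  intro n hn
  obtain ⟨j, rfl, hj⟩ := mem_subscripts.1 hn
  obtain ⟨-, -, -, -, -, -, -, hmax, -⟩ := h
  exact hmax j hj

end propP

/-- 0-based indices: write `m = t(d+1) + a` with `t ≥ 1`, `0 ≤ a ≤ d`, and let
`σ` satisfy property `P_t` (with parameter `j1`; 0-based subscripts `i_r = (r-1)(d+1)`,
`j_r = j1 + (r-1)(d+1)`, `k = m + j1 - (d+1)`).  Then `σ` is a critical cell iff either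
`j_t = k`, or `k = i_{t+1} = t(d+1)` and
`σ = {b_{i_1}, b_{j_1}, b_{i_2}, b_{j_2}, …, b_{i_t}, b_{j_t}, b_{i_{t+1}}}`. -/
theorem stmt13 (m d t a j1 : ℕ) (hd : 1 ≤ d) (hdm : d ≤ m)
    (ht : 1 ≤ t) (ha : a ≤ d) (hm : m = t * (d + 1) + a)
    (σ : Finset (Fin m ⊕ Fin m)) (hP : propP m d t j1 σ) :
    σ ∈ setC m d ↔
      (j1 + (t - 1) * (d + 1) = m + j1 - (d + 1) ∨
       (m + j1 - (d + 1) = t * (d + 1) ∧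
        ∀ j : Fin m, Sum.inr j ∈ σ ↔
          ((∃ r, r ≤ t ∧ j.val = r * (d + 1)) ∨
           (∃ r, r < t ∧ j.val = j1 + r * (d + 1))))) := by
  obtain ⟨u, rfl⟩ := Nat.exists_eq_add_of_le' ht
  have ⟨_, hB, hp0, hpd, _⟩ := hP
  have hk : m + j1 - (d + 1) + (d + 1) = m + j1 := by lia
  have hmax := hP.le_of_mem_subscripts
  have hrigid := hP.isRigidBelow hdm
  rw [mem_setC_iff hdm hB, hrigid.mem_phase_range_iff_le hp0 hpd hk (by lia) hmax,
    le_iff_lt_or_eq, hrigid.last_lt_iff hpd hk (by lia), Nat.add_sub_cancel]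
  refine or_congr_right (and_iff_left_of_imp fun hku j => ?_).symm
  rw [← coe_mem_subscripts]
  exact hrigid.mem_iff_of_last_eq hpd hmax hku
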